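/- arXiv:1707.05391 — 2 statements merged into one kernel-verified Lean document; each statement's English description precedes it below -/
import Mathlib

section
/- For β > 0 and n ≥ 0, the Chebyshev truncation error of e^{−β(x+1)} satisfies max_{x∈[−1,1]} |p_n(x) − e^{−β(x+1)}| = 2 e^{−β} Σ_{j=n+1}^∞ I_j(β), where p_n(x) = e^{−β}(I_0(β) + 2 Σ_{j=1}^n I_j(β) T_j(−x)); in particular the maximum is attained at x = −1. -/
open MeasureTheory

/-- The modified Bessel function of the first kind,
`I_j(β) = (1/π) ∫_0^π e^{β cos θ} cos(jθ) dθ`. -/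
noncomputable def besselI (j : ℕ) (β : ℝ) : ℝ :=
  (1 / Real.pi) * ∫ θ in (0:ℝ)..Real.pi, Real.exp (β * Real.cos θ) * Real.cos (j * θ)

/-- Degree-`n` Chebyshev truncation of `e^{−β(x+1)}`:
`p_n(x) = e^{−β}(I_0(β) + 2 Σ_{j=1}^n I_j(β) T_j(−x))`. -/
noncomputable def expTrunc (β : ℝ) (n : ℕ) (x : ℝ) : ℝ :=
  Real.exp (-β) *
    (besselI 0 β + 2 * ∑ j ∈ Finset.Icc 1 n, besselI j β * (Polynomial.Chebyshev.T ℝ (j : ℤ)).eval (-x))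

theorem cos_pow_int (m : ℕ) : ∀ k : ℤ, 0 ≤ ∫ θ in (0:ℝ)..Real.pi, Real.cos θ ^ m * Real.cos (k * θ) := by
  induction m with
  | zero =>
    intro k
    by_cases hk : k = 0
    · subst hk; simp [Real.pi_pos.le]
    · have h : (k:ℝ) ≠ 0 := by exact_mod_cast hk
      simp [intervalIntegral.integral_comp_mul_left _ h]
  | succ m ih =>
    intro k
    have e : ∀ θ : ℝ, Real.cos θ ^ (m+1) * Real.cos (k * θ) =
        (1/2) * (Real.cos θ ^ m * Real.cos ((k+1 : ℤ) * θ) + Real.cos θ ^ m * Real.cos ((k-1 : ℤ) * θ)) := by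
      intro θ
      push_cast
      rw [add_mul, sub_mul, one_mul, Real.cos_add, Real.cos_sub]; ring
    simp_rw [e]
    rw [intervalIntegral.integral_const_mul, intervalIntegral.integral_add]
    · have := ih (k+1); have := ih (k-1); linarith
    · exact Continuous.intervalIntegrable (by fun_prop) _ _
    · exact Continuous.intervalIntegrable (by fun_prop) _ _

theorem besselI_nonneg (j : ℕ) {β : ℝ} (hβ : 0 < β) : 0 ≤ besselI j β := by
  unfold besselI
  refine mul_nonneg (by have := Real.pi_pos; positivity) ?_
  have key : HasSum (fun m : ℕ => ∫ θ in (0:ℝ)..Real.pi, β ^ m / m.factorial * (Real.cos θ ^ m * Real.cos (j * θ)))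
      (∫ θ in (0:ℝ)..Real.pi, Real.exp (β * Real.cos θ) * Real.cos (j * θ)) := by
    refine intervalIntegral.hasSum_integral_of_dominated_convergence
      (fun m _ => β ^ m / m.factorial) ?_ ?_ ?_ ?_ ?_
    · intro m; exact Continuous.aestronglyMeasurable (by fun_prop)
    · intro m
      refine Filter.Eventually.of_forall fun θ _ => ?_
      rw [norm_mul, norm_mul, norm_pow, Real.norm_eq_abs, Real.norm_eq_abs, Real.norm_eq_abs,
        abs_of_nonneg (by positivity : 0 ≤ β ^ m / (m.factorial:ℝ))]
      refine mul_le_of_le_one_right (by positivity) ?_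
      exact mul_le_one₀ (pow_le_one₀ (abs_nonneg _) (Real.abs_cos_le_one _)) (abs_nonneg _) (Real.abs_cos_le_one _)
    · exact Filter.Eventually.of_forall fun θ _ => Real.summable_pow_div_factorial β
    · simp
    · refine Filter.Eventually.of_forall fun θ _ => ?_
      have h := (NormedSpace.expSeries_div_hasSum_exp (β * Real.cos θ)).mul_right (Real.cos (j * θ))
      rw [← Real.exp_eq_exp_ℝ] at h
      have e : (fun m : ℕ => β ^ m / m.factorial * (Real.cos θ ^ m * Real.cos (j * θ))) =
          fun m : ℕ => (β * Real.cos θ) ^ m / m.factorial * Real.cos (j * θ) := by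
        funext m
        rw [mul_pow]; ring
      exact e ▸ h
  refine key.nonneg fun m => ?_
  rw [intervalIntegral.integral_const_mul]
  have := cos_pow_int m j
  push_cast at this
  positivity

theorem besselI_rec (j : ℕ) (β : ℝ) :
    (j + 1) * besselI (j+1) β = β / 2 * (besselI j β - besselI (j+2) β) := by
  have h := intervalIntegral.integral_eq_sub_of_hasDerivAt (a := 0) (b := Real.pi)
    (f := fun θ => Real.exp (β * Real.cos θ) * Real.sin ((j+1 : ℕ) * θ))
    (f' := fun θ => ((j:ℝ)+1) * (Real.exp (β * Real.cos θ) * Real.cos ((j+1 : ℕ) * θ)) -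
      β / 2 * (Real.exp (β * Real.cos θ) * Real.cos (j * θ) - Real.exp (β * Real.cos θ) * Real.cos ((j+2 : ℕ) * θ)))
    (fun θ _ => by
      have h1 : HasDerivAt (fun θ => Real.exp (β * Real.cos θ)) (Real.exp (β * Real.cos θ) * (β * (-Real.sin θ))) θ :=
        ((Real.hasDerivAt_cos θ).const_mul β).exp
      have h2 : HasDerivAt (fun θ => Real.sin ((j+1 : ℕ) * θ)) (Real.cos ((j+1 : ℕ) * θ) * (((j+1 : ℕ):ℝ) * 1)) θ :=
        ((hasDerivAt_id θ).const_mul _).sin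
      refine (h1.mul h2).congr_deriv ?_
      have e1 : (j:ℝ) * θ = (j+1 : ℕ) * θ - θ := by push_cast; ring
      have e2 : ((j + 2 : ℕ):ℝ) * θ = (j+1 : ℕ) * θ + θ := by push_cast; ring
      rw [e1, e2, Real.cos_add, Real.cos_sub]
      push_cast; ring)
    (Continuous.intervalIntegrable (by fun_prop) _ _)
  rw [intervalIntegral.integral_sub (Continuous.intervalIntegrable (by fun_prop) _ _)
    (Continuous.intervalIntegrable (by fun_prop) _ _), intervalIntegral.integral_const_mul,
    intervalIntegral.integral_const_mul, intervalIntegral.integral_sub (Continuous.intervalIntegrable (by fun_prop) _ _)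
    (Continuous.intervalIntegrable (by fun_prop) _ _), Real.sin_nat_mul_pi] at h
  simp only [mul_zero, Real.sin_zero, sub_zero] at h
  unfold besselI
  linear_combination (1 / Real.pi) * h

theorem besselI_summable {β : ℝ} (hβ : 0 < β) : Summable (fun j => besselI j β) := by
  rw [← summable_nat_add_iff 1]
  refine summable_of_sum_range_le (c := β / 2 * (besselI 0 β + besselI 1 β)) (fun j => besselI_nonneg _ hβ) ?_
  intro N
  have : ∑ i ∈ Finset.range N, besselI (i+1) β ≤
      β / 2 * (besselI 0 β + besselI 1 β - besselI N β - besselI (N+1) β) := by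
    induction N with
    | zero => simp
    | succ N ih =>
      rw [Finset.sum_range_succ]
      have h1 := besselI_rec N β
      have h2 := mul_nonneg (Nat.cast_nonneg (α := ℝ) N) (besselI_nonneg (N+1) hβ)
      rw [show N + 1 + 1 = N + 2 from rfl]
      linarith
  refine this.trans ?_
  have h1 := besselI_nonneg N hβ
  have h2 := besselI_nonneg (N+1) hβ
  gcongr; linarith

instance : Fact (0 < 2 * Real.pi) := ⟨by have := Real.pi_pos; positivity⟩

noncomputable def bf (β : ℝ) : C(AddCircle (2 * Real.pi), ℂ) :=
  ⟨fun θ => ((Real.exp (β * Real.Angle.cos θ) : ℝ) : ℂ), by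
    have : Continuous fun θ : Real.Angle => ((Real.exp (β * Real.Angle.cos θ) : ℝ) : ℂ) := by
      have := Real.Angle.continuous_cos
      fun_prop
    exact this⟩

theorem bf_coe (β θ : ℝ) : bf β (θ : AddCircle (2 * Real.pi)) = ((Real.exp (β * Real.cos θ) : ℝ) : ℂ) := rfl

theorem bf_coeff (β : ℝ) (n : ℤ) : fourierCoeff (bf β) n = (besselI n.natAbs β : ℂ) := by
  rw [fourierCoeff_eq_intervalIntegral _ _ (-Real.pi)]
  have hpi := Real.pi_pos
  rw [show -Real.pi + 2 * Real.pi = Real.pi by ring]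
  have e : ∀ x : ℝ, fourier (-n) (x : AddCircle (2 * Real.pi)) • bf β (x : AddCircle (2 * Real.pi)) =
      Complex.exp (-(n * x * Complex.I)) * ((Real.exp (β * Real.cos x) : ℝ) : ℂ) := by
    intro x
    rw [fourier_coe_apply, bf_coe, smul_eq_mul]
    congr 2
    have : (Real.pi : ℂ) ≠ 0 := by exact_mod_cast hpi.ne'
    push_cast
    field_simp
  simp_rw [e]
  have hc : Continuous fun x : ℝ => Complex.exp (-(n * x * Complex.I)) * ((Real.exp (β * Real.cos x) : ℝ) : ℂ) := by fun_prop
  rw [← intervalIntegral.integral_add_adjacent_intervals (b := 0) (hc.intervalIntegrable _ _) (hc.intervalIntegrable _ _)]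
  have h0 := intervalIntegral.integral_comp_neg (a := 0) (b := Real.pi) (fun x : ℝ => Complex.exp (-(n * x * Complex.I)) * ((Real.exp (β * Real.cos x) : ℝ) : ℂ))
  rw [neg_zero] at h0
  rw [← h0, ← intervalIntegral.integral_add (Continuous.intervalIntegrable (by fun_prop) _ _) (hc.intervalIntegrable _ _)]
  have e2 : ∀ x : ℝ, Complex.exp (-(n * (-x : ℝ) * Complex.I)) * ((Real.exp (β * Real.cos (-x)) : ℝ) : ℂ) +
      Complex.exp (-(n * x * Complex.I)) * ((Real.exp (β * Real.cos x) : ℝ) : ℂ) =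
      ((2 * (Real.exp (β * Real.cos x) * Real.cos (n.natAbs * x)) : ℝ) : ℂ) := by
    intro x
    have : Real.cos (n.natAbs * x) = Real.cos (n * x) := by
      rcases Int.natAbs_eq n with h | h
      · conv_rhs => rw [h]
        simp
      · conv_rhs => rw [h]
        rw [Int.cast_neg, Int.cast_natCast, neg_mul, Real.cos_neg]
    rw [this, Real.cos_neg]
    push_cast
    rw [show Complex.cos ((n:ℂ) * x) = (Complex.exp (n * x * Complex.I) + Complex.exp (-(n * x) * Complex.I)) / 2 from rfl]
    rw [show -((n:ℂ) * -(x:ℂ) * Complex.I) = n * x * Complex.I by ring, show -((n:ℂ) * (x:ℂ)) * Complex.I = -(n * x * Complex.I) by ring]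
    ring
  simp_rw [e2]
  rw [intervalIntegral.integral_ofReal, intervalIntegral.integral_const_mul, Complex.real_smul, ← Complex.ofReal_mul, besselI]
  congr 1
  field_simp

theorem bessel_hasSum {β : ℝ} (hβ : 0 < β) (θ : ℝ) :
    HasSum (fun j : ℕ => 2 * (besselI j β * Real.cos (j * θ))) (Real.exp (β * Real.cos θ) + besselI 0 β) := by
  have hs : Summable (fourierCoeff (bf β)) := by
    have h : Summable (fun j : ℕ => (besselI j β : ℂ)) := by exact_mod_cast besselI_summable hβ
    refine Summable.of_nat_of_neg ?_ ?_
    · simpa [bf_coeff] using h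
    · simpa [bf_coeff] using h
  have h := (has_pointwise_sum_fourier_series_of_summable hs (θ : AddCircle (2 * Real.pi))).nat_add_neg
  rw [← Complex.hasSum_ofReal]
  convert h using 1
  · funext j
    have hpi : (Real.pi : ℂ) ≠ 0 := by exact_mod_cast Real.pi_pos.ne'
    rw [bf_coeff, bf_coeff, fourier_coe_apply, fourier_coe_apply]
    simp only [Int.natAbs_neg, Int.natAbs_natCast, smul_eq_mul]
    push_cast
    rw [Complex.cos]
    rw [show 2 * (Real.pi:ℂ) * Complex.I * j * θ / (2 * Real.pi) = j * θ * Complex.I by field_simp,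
      show 2 * (Real.pi:ℂ) * Complex.I * (-j) * θ / (2 * Real.pi) = -(j * θ) * Complex.I by field_simp]
    ring
  · rw [bf_coe, bf_coeff]; simp

theorem expTrunc_tail {β : ℝ} (hβ : 0 < β) (n : ℕ) (θ : ℝ) :
    expTrunc β n (-Real.cos θ) - Real.exp (-β * (-Real.cos θ + 1)) =
      -(2 * Real.exp (-β) * ∑' j : ℕ, besselI (n + 1 + j) β * Real.cos ((n + 1 + j : ℕ) * θ)) := by
  have h := ((hasSum_nat_add_iff' (n+1)).2 (bessel_hasSum hβ θ)).tsum_eq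
  rw [tsum_mul_left, ← Finset.mul_sum, Finset.sum_range_succ'] at h
  have e : ∑ j ∈ Finset.Icc 1 n, besselI j β * (Polynomial.Chebyshev.T ℝ (j : ℤ)).eval (- -Real.cos θ) =
      ∑ j ∈ Finset.range n, besselI (j+1) β * Real.cos ((j+1 : ℕ) * θ) := by
    rw [Finset.range_eq_Ico, Finset.sum_Ico_add' (fun j => besselI j β * Real.cos (j * θ)) 0 n 1]
    simp only [neg_neg, Polynomial.Chebyshev.T_real_cos]
    rfl
  rw [expTrunc, e, show -β * (-Real.cos θ + 1) = -β + β * Real.cos θ by ring, Real.exp_add]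
  have e3 : ∑' j : ℕ, besselI (n + 1 + j) β * Real.cos ((n + 1 + j : ℕ) * θ) =
     ∑' j : ℕ, besselI (j + (n + 1)) β * Real.cos ((j + (n + 1) : ℕ) * θ) := by
    simp_rw [add_comm]
  rw [e3]
  simp only [Nat.cast_zero, zero_mul, Real.cos_zero] at h
  linear_combination Real.exp (-β) * h

theorem expTrunc_error (β : ℝ) (hβ : 0 < β) (n : ℕ) :
    (∀ x ∈ Set.Icc (-1 : ℝ) 1,
        |expTrunc β n x - Real.exp (-β * (x + 1))| ≤
          2 * Real.exp (-β) * ∑' j : ℕ, besselI (n + 1 + j) β) ∧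
      |expTrunc β n (-1) - Real.exp (-β * (-1 + 1))| =
        2 * Real.exp (-β) * ∑' j : ℕ, besselI (n + 1 + j) β := by
  have hs : Summable fun j : ℕ => besselI (n + 1 + j) β := by
    have := (summable_nat_add_iff (n+1)).2 (besselI_summable hβ)
    simpa only [add_comm] using this
  constructor
  · intro x hx
    have hc : x = -Real.cos (Real.arccos (-x)) := by
      rw [Real.cos_arccos (by linarith [hx.2]) (by linarith [hx.1]), neg_neg]
    rw [hc, expTrunc_tail hβ, abs_neg, abs_mul, abs_of_nonneg (by positivity : 0 ≤ 2 * Real.exp (-β))]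
    gcongr
    rw [← Real.norm_eq_abs]
    refine tsum_of_norm_bounded hs.hasSum fun j => ?_
    rw [norm_mul, Real.norm_eq_abs, Real.norm_eq_abs, abs_of_nonneg (besselI_nonneg _ hβ)]
    exact mul_le_of_le_one_right (besselI_nonneg _ hβ) (Real.abs_cos_le_one _)
  · have h := expTrunc_tail hβ n 0
    simp only [Real.cos_zero, mul_zero, mul_one] at h
    rw [h, abs_neg, abs_of_nonneg]
    exact mul_nonneg (by positivity) (tsum_nonneg fun j => besselI_nonneg _ hβ)
end

section
/- For every β > 0 and ε ∈ (0, 1/2], with n = ⌈√(2·⌈max(βe², log(2/ε))⌉·log(4/ε))⌉, one has 2 e^{−β} Σ_{j=n+1}^∞ I_j(β) ≤ ε; consequently the degree-n Chebyshev truncation of e^{−β(x+1)} approximates it uniformly on [−1,1] with error at most ε. -/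
open MeasureTheory

lemma aux_congr {ι E : Type*} [AddCommMonoid E] [TopologicalSpace E] {f g : ι → E} {a : E}
    (h : HasSum f a) (hfg : ∀ i, f i = g i) : HasSum g a := by
  rwa [funext hfg] at h

lemma aux_double (β : ℝ) (s : ℂ) :
    HasSum (fun p : ℕ × ℕ => (((β/2)^p.1/(p.1.factorial:ℝ) * ((β/2)^p.2/(p.2.factorial:ℝ)) : ℝ) : ℂ)
      * Complex.exp (((p.1:ℂ) - p.2) * s)) (Complex.exp (β * Complex.cosh s)) := by
  have key : ∀ z : ℂ, HasSum (fun k : ℕ => z ^ k / (k.factorial : ℂ)) (Complex.exp z) := by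
    intro z
    have := NormedSpace.expSeries_div_hasSum_exp (𝔸 := ℂ) z
    rwa [← Complex.exp_eq_exp_ℂ] at this
  have h1 := key ((β/2) * Complex.exp s)
  have h2 := key ((β/2) * Complex.exp (-s))
  have n1 : ∀ z : ℂ, Summable (fun k : ℕ => ‖z ^ k / (k.factorial : ℂ)‖) := fun z =>
    NormedSpace.norm_expSeries_div_summable z
  have h3 := summable_mul_of_summable_norm (n1 ((β/2) * Complex.exp s)) (n1 ((β/2) * Complex.exp (-s)))
  have h4 := h1.mul h2 h3
  rw [← Complex.exp_add] at h4
  have e : (β/2) * Complex.exp s + (β/2) * Complex.exp (-s) = β * Complex.cosh s := by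
    rw [Complex.cosh]; ring
  rw [e] at h4
  refine aux_congr h4 ?_
  rintro ⟨k, l⟩
  simp only [mul_pow, ← Complex.exp_nat_mul]
  have : ((k:ℂ) - l) * s = k * s + l * (-s) := by ring
  rw [this, Complex.exp_add]
  push_cast
  ring

lemma aux_double_cosh (β : ℝ) (s : ℂ) :
    HasSum (fun p : ℕ × ℕ => (((β/2)^p.1/(p.1.factorial:ℝ) * ((β/2)^p.2/(p.2.factorial:ℝ)) : ℝ) : ℂ)
      * Complex.cosh ((Nat.dist p.1 p.2 : ℂ) * s)) (Complex.exp (β * Complex.cosh s)) := by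
  have h1 := aux_double β s
  have h2 := aux_double β (-s)
  rw [Complex.cosh_neg] at h2
  have h := (h1.add h2).div_const 2
  rw [add_self_div_two] at h
  refine aux_congr h ?_
  rintro ⟨k, l⟩
  have : Complex.cosh ((Nat.dist k l : ℂ) * s) = Complex.cosh (((k:ℂ) - l) * s) := by
    rcases le_total k l with hkl | hkl
    · rw [Nat.dist_eq_sub_of_le hkl, Nat.cast_sub hkl, ← Complex.cosh_neg]
      congr 1; ring
    · rw [Nat.dist_eq_sub_of_le_right hkl, Nat.cast_sub hkl]
  simp only [this]
  rw [Complex.cosh]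
  simp only [mul_neg]
  ring

lemma aux_exists (β : ℝ) (hβ : 0 < β) : ∃ b : ℕ → ℝ, (∀ j, 0 ≤ b j) ∧
    (∀ θ : ℝ, HasSum (fun j => b j * Real.cos (j * θ)) (Real.exp (β * Real.cos θ))) ∧
    (∀ t : ℝ, HasSum (fun j => b j * Real.cosh (j * t)) (Real.exp (β * Real.cosh t))) := by
  set w : ℕ × ℕ → ℝ := fun p => (β/2)^p.1/(p.1.factorial:ℝ) * ((β/2)^p.2/(p.2.factorial:ℝ)) with hw
  set g : ℕ × ℕ → ℕ := fun p => Nat.dist p.1 p.2 with hg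
  set b : ℕ → ℝ := fun j => ∑' p : g ⁻¹' {j}, w p with hb
  have main : ∀ s : ℂ, HasSum (fun j : ℕ => (b j : ℂ) * Complex.cosh (j * s))
      (Complex.exp (β * Complex.cosh s)) := by
    intro s
    have h := (aux_double_cosh β s).tsum_fiberwise g
    refine aux_congr h ?_
    intro j
    rw [hb, Complex.ofReal_tsum, ← tsum_mul_right]
    refine tsum_congr ?_
    rintro ⟨p, hp⟩
    have hp' : Nat.dist p.1 p.2 = j := hp
    simp only [hp', hw]
  refine ⟨b, ?_, ?_, ?_⟩
  · intro j
    refine tsum_nonneg ?_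
    intro p
    simp only [hw]
    positivity
  · intro θ
    have h := main (θ * Complex.I)
    rw [← Complex.hasSum_ofReal]
    push_cast
    rw [Complex.cosh_mul_I] at h
    refine aux_congr h ?_
    intro j
    rw [← mul_assoc, Complex.cosh_mul_I]
  · intro t
    rw [← Complex.hasSum_ofReal]
    push_cast
    exact main t

lemma aux_int_cos (c : ℤ) (hc : c ≠ 0) : ∫ θ in (0:ℝ)..Real.pi, Real.cos (c * θ) = 0 := by
  have hc' : (c:ℝ) ≠ 0 := by exact_mod_cast hc
  rw [intervalIntegral.integral_comp_mul_left (fun x => Real.cos x) hc', integral_cos]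
  simp [Real.sin_int_mul_pi]

lemma aux_orth (i j : ℕ) : ∫ θ in (0:ℝ)..Real.pi, Real.cos (i * θ) * Real.cos (j * θ) =
    if i = j then (if j = 0 then Real.pi else Real.pi / 2) else 0 := by
  have e : ∀ θ : ℝ, Real.cos (i * θ) * Real.cos (j * θ) =
      (Real.cos (((i - j : ℤ) : ℝ) * θ) + Real.cos (((i + j : ℤ) : ℝ) * θ)) / 2 := by
    intro θ
    push_cast
    rw [sub_mul, add_mul, Real.cos_sub, Real.cos_add]; ring
  simp_rw [e]
  rw [intervalIntegral.integral_div, intervalIntegral.integral_add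
    (Continuous.intervalIntegrable (by fun_prop) _ _)
    (Continuous.intervalIntegrable (by fun_prop) _ _)]
  split_ifs with h1 h2
  · subst h1; subst h2; simp
  · subst h1
    rw [aux_int_cos (i + i) (by omega)]; simp
  · rw [aux_int_cos (i + j) (by omega), aux_int_cos (i - j) (by omega)]; simp

lemma aux_bessel (β : ℝ) (b : ℕ → ℝ) (hb : ∀ j, 0 ≤ b j)
    (h : ∀ θ : ℝ, HasSum (fun j => b j * Real.cos (j * θ)) (Real.exp (β * Real.cos θ))) (j : ℕ) :
    besselI j β = if j = 0 then b j else b j / 2 := by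
  have hs : Summable b := by simpa using (h 0).summable
  have H : HasSum (fun i : ℕ => ∫ θ in (0:ℝ)..Real.pi, (b i * Real.cos (i * θ)) * Real.cos (j * θ))
      (∫ θ in (0:ℝ)..Real.pi, Real.exp (β * Real.cos θ) * Real.cos (j * θ)) := by
    refine intervalIntegral.hasSum_integral_of_dominated_convergence (fun i _ => b i) ?_ ?_ ?_ ?_ ?_
    · intro i
      exact Continuous.aestronglyMeasurable (by fun_prop)
    · intro i
      refine Filter.Eventually.of_forall fun θ _ => ?_
      rw [norm_mul, norm_mul, Real.norm_of_nonneg (hb i), mul_assoc]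
      refine mul_le_of_le_one_right (hb i) ?_
      exact mul_le_one₀ (Real.abs_cos_le_one _) (norm_nonneg _) (Real.abs_cos_le_one _)
    · exact Filter.Eventually.of_forall fun θ _ => hs
    · simp
    · exact Filter.Eventually.of_forall fun θ _ => (h θ).mul_right _
  simp_rw [mul_assoc, intervalIntegral.integral_const_mul, aux_orth] at H
  have H2 := hasSum_single (f := fun i : ℕ => b i * if i = j then (if j = 0 then Real.pi else Real.pi / 2) else 0) j
    (by intro i hi; simp [hi])
  rw [besselI, H.unique H2, if_pos rfl]
  have := Real.pi_ne_zero
  split_ifs <;> field_simp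

lemma aux_num (β ε : ℝ) (hβ : 0 < β) (hε0 : 0 < ε) (hε : ε ≤ 1/2) (n : ℕ)
    (hn : n = ⌈Real.sqrt (2 * (⌈max (β * Real.exp 1 ^ 2) (Real.log (2 / ε))⌉₊ : ℝ) *
        Real.log (4 / ε))⌉₊) :
    ∃ t : ℝ, 0 ≤ t ∧ β * Real.cosh t - β - t * n ≤ - Real.log (4 / ε) := by
  set L := Real.log (4 / ε) with hL
  set m := ⌈max (β * Real.exp 1 ^ 2) (Real.log (2 / ε))⌉₊ with hm
  have hm0 : max (β * Real.exp 1 ^ 2) (Real.log (2 / ε)) ≤ m := Nat.le_ceil _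
  have hm1 := (le_max_left _ _).trans hm0
  have hm2 := (le_max_right _ _).trans hm0
  have hmpos : (0:ℝ) < m := lt_of_lt_of_le (by positivity) hm1
  have hmone : (1:ℝ) ≤ m := by
    have : 0 < m := by exact_mod_cast hmpos
    exact_mod_cast this
  have hLpos : 0 < L := by
    apply Real.log_pos
    rw [lt_div_iff₀ hε0]; linarith
  have hL2 : L = Real.log 2 + Real.log (2 / ε) := by
    rw [← Real.log_mul (by norm_num) (by positivity), hL]; congr 1; ring
  have hlog2 : Real.log 2 ≤ 1 := by linarith [Real.log_two_lt_d9]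
  set u := L / m with hu
  have hu0 : 0 < u := by positivity
  have hu2 : u ≤ 2 := by
    rw [hu, div_le_iff₀ hmpos]; linarith
  have hmu : m * u = L := by rw [hu]; field_simp
  refine ⟨Real.sqrt (2 * u), Real.sqrt_nonneg _, ?_⟩
  have hc : Real.cosh (Real.sqrt (2*u)) ≤ Real.exp u := by
    have := Real.cosh_le_exp_half_sq (Real.sqrt (2*u))
    rw [Real.sq_sqrt (by positivity)] at this
    simpa using this
  have hnn : Real.sqrt (2 * m * L) ≤ n := by rw [hn]; exact Nat.le_ceil _
  have htn : 2 * L ≤ Real.sqrt (2 * u) * n := by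
    have h1 : Real.sqrt (2*u) * Real.sqrt (2 * m * L) = 2 * L := by
      rw [← Real.sqrt_mul (by positivity)]
      have : 2 * u * (2 * m * L) = (2 * L)^2 := by
        rw [← hmu]; ring
      rw [this, Real.sqrt_sq (by positivity)]
    rw [← h1]
    exact mul_le_mul_of_nonneg_left hnn (Real.sqrt_nonneg _)
  have hexp : Real.exp u - 1 ≤ u * Real.exp u := by
    have h1 := Real.add_one_le_exp (-u)
    have h2 : Real.exp (-u) * Real.exp u = 1 := by rw [← Real.exp_add]; simp
    nlinarith [Real.exp_pos u]
  have hexp2 : Real.exp u ≤ Real.exp 1 ^ 2 := by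
    rw [← Real.exp_nat_mul]; apply Real.exp_le_exp.mpr; simpa using hu2
  have : β * Real.cosh (Real.sqrt (2*u)) - β ≤ L := by
    calc β * Real.cosh (Real.sqrt (2*u)) - β = β * (Real.cosh (Real.sqrt (2*u)) - 1) := by ring
      _ ≤ β * (u * Real.exp 1 ^ 2) := by
        apply mul_le_mul_of_nonneg_left _ hβ.le
        have := mul_le_mul_of_nonneg_left hexp2 hu0.le
        linarith
      _ = (β * Real.exp 1 ^ 2) * u := by ring
      _ ≤ m * u := mul_le_mul_of_nonneg_right hm1 hu0.le
      _ = L := hmu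
  linarith

/-- For `β > 0`, `ε ∈ (0,1/2]` and `n = ⌈√(2⌈max(βe², log(2/ε))⌉ log(4/ε))⌉`, the Chebyshev
tail satisfies `2 e^{−β} Σ_{j=n+1}^∞ I_j(β) ≤ ε`, so the degree-`n` Chebyshev truncation of
`e^{−β(x+1)}` approximates it uniformly on `[−1,1]` with error at most `ε`. -/
theorem expTrunc_error_le (β ε : ℝ) (hβ : 0 < β) (hε0 : 0 < ε) (hε : ε ≤ 1/2) (n : ℕ)
    (hn : n = ⌈Real.sqrt (2 * (⌈max (β * Real.exp 1 ^ 2) (Real.log (2 / ε))⌉₊ : ℝ) *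
        Real.log (4 / ε))⌉₊) :
    2 * Real.exp (-β) * ∑' j : ℕ, besselI (n + 1 + j) β ≤ ε ∧
      ∀ x ∈ Set.Icc (-1 : ℝ) 1, |expTrunc β n x - Real.exp (-β * (x + 1))| ≤ ε := by
  obtain ⟨b, hb, hcos, hcosh⟩ := aux_exists β hβ
  obtain ⟨t, ht0, ht⟩ := aux_num β ε hβ hε0 hε n hn
  have hB := aux_bessel β b hb hcos
  have hs : Summable b := by simpa using (hcos 0).summable
  have hs' : Summable (fun j => b (n + 1 + j)) := by
    simpa [add_comm] using (summable_nat_add_iff (n+1)).mpr hs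
  have tail : Real.exp (-β) * ∑' j : ℕ, b (n + 1 + j) ≤ ε := by
    have hsc := (hcosh t).summable
    have hsc' : Summable (fun j : ℕ => b (n + 1 + j) * Real.cosh ((n + 1 + j : ℕ) * t)) := by
      simpa [add_comm] using (summable_nat_add_iff (n+1)).mpr hsc
    have h1 : ∑' j : ℕ, b (n + 1 + j) * Real.cosh ((n + 1 + j : ℕ) * t) ≤
        Real.exp (β * Real.cosh t) := by
      rw [← (hcosh t).tsum_eq, ← hsc.sum_add_tsum_nat_add (n+1)]
      have : 0 ≤ ∑ i ∈ Finset.range (n+1), b i * Real.cosh (i * t) :=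
        Finset.sum_nonneg fun i _ => mul_nonneg (hb i) (Real.cosh_pos _).le
      simp only [add_comm _ (n+1)]
      linarith
    have h2 : (∑' j : ℕ, b (n + 1 + j)) * (Real.exp (t * n) / 2) ≤ Real.exp (β * Real.cosh t) := by
      refine le_trans ?_ h1
      rw [← tsum_mul_right]
      refine Summable.tsum_le_tsum (fun j => ?_) (hs'.mul_right _) hsc'
      refine mul_le_mul_of_nonneg_left ?_ (hb _)
      rw [Real.cosh_eq]
      have h3 : Real.exp (t * n) ≤ Real.exp ((n + 1 + j : ℕ) * t) := by
        apply Real.exp_le_exp.mpr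
        push_cast
        have : 0 ≤ (j:ℝ) * t := by positivity
        nlinarith
      have := Real.exp_pos (-((n + 1 + j : ℕ) * t))
      linarith
    have h4 : (∑' j : ℕ, b (n + 1 + j)) ≤ 2 * Real.exp (β * Real.cosh t - t * n) := by
      rw [Real.exp_sub, ← mul_div_assoc, le_div_iff₀ (Real.exp_pos _)]
      linarith
    calc Real.exp (-β) * ∑' j : ℕ, b (n + 1 + j)
        ≤ Real.exp (-β) * (2 * Real.exp (β * Real.cosh t - t * n)) :=
          mul_le_mul_of_nonneg_left h4 (Real.exp_pos _).le
      _ = 2 * Real.exp (β * Real.cosh t - β - t * n) := by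
          rw [mul_left_comm, ← Real.exp_add]; congr 2; ring
      _ ≤ 2 * Real.exp (- Real.log (4 / ε)) := by gcongr
      _ = ε / 2 := by
          rw [Real.exp_neg, Real.exp_log (by positivity)]; field_simp; norm_num
      _ ≤ ε := by linarith
  constructor
  · have : ∀ j, besselI (n + 1 + j) β = b (n + 1 + j) / 2 := fun j => by
      rw [hB, if_neg (by omega)]
    simp_rw [this, tsum_div_const]
    linarith
  · intro x hx
    obtain ⟨hx1, hx2⟩ := hx
    set φ := Real.arccos (-x) with hφ
    have hxφ : Real.cos φ = -x := Real.cos_arccos (by linarith) (by linarith)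
    have hT : ∀ j : ℕ, (Polynomial.Chebyshev.T ℝ (j : ℤ)).eval (-x) = Real.cos (j * φ) := by
      intro j
      rw [← hxφ, Polynomial.Chebyshev.T_real_cos]; simp
    have hE : Real.exp (-β * (x + 1)) = Real.exp (-β) * Real.exp (β * Real.cos φ) := by
      rw [← Real.exp_add, hxφ]; congr 1; ring
    have hP : expTrunc β n x = Real.exp (-β) * ∑ j ∈ Finset.range (n+1), b j * Real.cos (j * φ) := by
      rw [expTrunc, Finset.sum_range_succ', Finset.mul_sum, hB 0]
      congr 1
      rw [add_comm]
      congr 1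
      · rw [Finset.range_eq_Ico, Finset.sum_Ico_add' (fun j : ℕ => b j * Real.cos (j * φ)) 0 n 1]
        refine Finset.sum_congr (by ext; simp) fun j hj => ?_
        rw [hT, hB, if_neg (by have := (Finset.mem_Icc.mp hj).1; omega)]; ring
      · simp
    have hsc := (hcos φ).summable
    have hsplit := hsc.sum_add_tsum_nat_add (n+1)
    rw [(hcos φ).tsum_eq] at hsplit
    simp only [add_comm _ (n+1)] at hsplit
    rw [hE, hP, ← hsplit, ← mul_sub, abs_mul, abs_of_pos (Real.exp_pos _), sub_add_cancel_left, abs_neg]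
    refine le_trans (mul_le_mul_of_nonneg_left ?_ (Real.exp_pos _).le) tail
    rw [← Real.norm_eq_abs]
    refine tsum_of_norm_bounded hs'.hasSum fun j => ?_
    rw [norm_mul, Real.norm_of_nonneg (hb _)]
    exact mul_le_of_le_one_right (hb _) (Real.abs_cos_le_one _)
end
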